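/- arXiv:2605.13273 — 9 statements merged into one kernel-verified Lean document; each statement's English description precedes it below -/
import Mathlib

section
/- Let E be a nontrivial real inner product space and let A : E ≃L[ℝ] E be a continuous linear equivalence; set C := max(‖A‖, ‖A⁻¹‖) (operator norms). Then for every ε > 0 and all unit vectors v₁, v₂ ∈ E with ∠(v₁, v₂) < ε / C², one has ‖A v₁‖ < exp(ε) · ‖A v₂‖. -/
open Real InnerProductGeometry

/-- Let `E` be a nontrivial real inner product space and `A : E ≃L[ℝ] E` a
continuous linear equivalence; set `C := max(‖A‖, ‖A⁻¹‖)` (operator norms). Then for every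
`ε > 0` and all unit vectors `v₁, v₂ ∈ E` with `∠(v₁, v₂) < ε / C²`, one has
`‖A v₁‖ < exp ε * ‖A v₂‖`. -/
theorem stmt0 {E : Type*} [NormedAddCommGroup E] [InnerProductSpace ℝ E] [Nontrivial E]
    (A : E ≃L[ℝ] E) (C : ℝ)
    (hC : C = max ‖(A : E →L[ℝ] E)‖ ‖(A.symm : E →L[ℝ] E)‖)
    (ε : ℝ) (hε : 0 < ε) (v₁ v₂ : E) (hv₁ : ‖v₁‖ = 1) (hv₂ : ‖v₂‖ = 1)
    (hangle : angle v₁ v₂ < ε / C ^ 2) :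
    ‖A v₁‖ < Real.exp ε * ‖A v₂‖ := by
  have hA : ‖(A : E →L[ℝ] E)‖ ≤ C := hC ▸ le_max_left _ _
  have hB : ‖(A.symm : E →L[ℝ] E)‖ ≤ C := hC ▸ le_max_right _ _
  have h1 : 1 ≤ C * ‖A v₂‖ := by
    have h := (A.symm : E →L[ℝ] E).le_of_opNorm_le hB (A v₂)
    simpa [hv₂] using h
  have hCpos : 0 < C := by
    by_contra hc
    nlinarith [norm_nonneg (A v₂)]
  have hd : ‖v₁ - v₂‖ ≤ angle v₁ v₂ := by
    refine abs_le_of_sq_le_sq' ?_ (angle_nonneg _ _) |>.2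
    rw [norm_sub_sq_real, inner_eq_cos_angle_of_norm_eq_one hv₁ hv₂, hv₁, hv₂]
    have := Real.one_sub_sq_div_two_le_cos (x := angle v₁ v₂)
    linarith
  have h2 : ‖A v₁‖ ≤ ‖A v₂‖ + C * ‖v₁ - v₂‖ := by
    have h := (A : E →L[ℝ] E).le_of_opNorm_le hA (v₁ - v₂)
    have h' : ‖A v₁ - A v₂‖ ≤ C * ‖v₁ - v₂‖ := by simpa using h
    have := norm_sub_norm_le (A v₁) (A v₂)
    linarith
  have h3 : C * ‖v₁ - v₂‖ < ε * ‖A v₂‖ := by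
    rw [lt_div_iff₀ (by positivity)] at hangle
    have h4 : C * (C * ‖v₁ - v₂‖) < C * (ε * ‖A v₂‖) := by
      have := mul_le_mul_of_nonneg_right hd (sq_nonneg C)
      have := mul_le_mul_of_nonneg_left h1 hε.le
      nlinarith
    exact lt_of_mul_lt_mul_left h4 hCpos.le
  have h5 := mul_le_mul_of_nonneg_right (Real.add_one_le_exp ε) (norm_nonneg (A v₂))
  linarith
end

section
/- Let E be a real inner product space and let A : E ≃L[ℝ] E be a continuous linear equivalence. For all linearly independent vectors v₁, v₂ ∈ E one has ‖A‖⁻² · ‖A⁻¹‖⁻² · sin ∠(v₁, v₂) ≤ sin ∠(A v₁, A v₂) ≤ ‖A‖² · ‖A⁻¹‖² · sin ∠(v₁, v₂). Consequently, setting L := 4·(log max(‖A‖, ‖A⁻¹‖) + 1), if in addition both ∠(v₁, v₂) and ∠(A v₁, A v₂) lie in the interval [0, π/2], then exp(−L) · ∠(v₁, v₂) ≤ ∠(A v₁, A v₂) ≤ exp(L) · ∠(v₁, v₂). -/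
open Real InnerProductGeometry

lemma aux_sq {E : Type*} [NormedAddCommGroup E] [InnerProductSpace ℝ E] (x y : E) (t : ℝ) :
    (‖x - t • y‖ * ‖y‖) ^ 2 = (Real.sin (angle x y) * ‖x‖ * ‖y‖) ^ 2
      + (t * ‖y‖ ^ 2 - inner ℝ x y) ^ 2 := by
  have h1 : (Real.sin (angle x y) * ‖x‖ * ‖y‖) ^ 2 = ‖x‖ ^ 2 * ‖y‖ ^ 2 - (inner ℝ x y) ^ 2 := by
    have hc := cos_angle_mul_norm_mul_norm x y
    have hs := Real.sin_sq_add_cos_sq (angle x y)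
    rw [← hc]
    linear_combination (‖x‖ ^ 2 * ‖y‖ ^ 2) * hs
  have h2 : ‖x - t • y‖ ^ 2 = ‖x‖ ^ 2 - 2 * (t * inner ℝ x y) + t ^ 2 * ‖y‖ ^ 2 := by
    rw [norm_sub_sq_real, inner_smul_right, norm_smul, mul_pow, Real.norm_eq_abs, sq_abs]
  rw [h1, mul_pow, h2]
  ring

lemma aux_le {E : Type*} [NormedAddCommGroup E] [InnerProductSpace ℝ E] (x y : E) (hy : y ≠ 0)
    (t : ℝ) : Real.sin (angle x y) * ‖x‖ ≤ ‖x - t • y‖ := by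
  have hy' : 0 < ‖y‖ := norm_pos_iff.2 hy
  have h00 := sin_angle_nonneg x y
  refine le_of_mul_le_mul_right ?_ hy'
  refine (sq_le_sq₀ (by positivity) (by positivity)).1 ?_
  rw [aux_sq x y t]
  nlinarith [sq_nonneg (t * ‖y‖ ^ 2 - inner ℝ x y)]

lemma aux_eq {E : Type*} [NormedAddCommGroup E] [InnerProductSpace ℝ E] (x y : E) (hy : y ≠ 0) :
    ∃ t : ℝ, ‖x - t • y‖ = Real.sin (angle x y) * ‖x‖ := by
  have hy' : 0 < ‖y‖ := norm_pos_iff.2 hy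
  have h00 := sin_angle_nonneg x y
  refine ⟨inner ℝ x y / ‖y‖ ^ 2, le_antisymm ?_ (aux_le x y hy _)⟩
  refine le_of_mul_le_mul_right ?_ hy'
  have h0 := sin_angle_nonneg x y
  refine (sq_le_sq₀ (by positivity) (by positivity)).1 ?_
  rw [aux_sq, div_mul_cancel₀ _ (by positivity)]
  simp

lemma aux_sin {E : Type*} [NormedAddCommGroup E] [InnerProductSpace ℝ E]
    (A : E ≃L[ℝ] E) (x y : E) (hx : x ≠ 0) (hy : y ≠ 0) :
    1 ≤ ‖(A : E →L[ℝ] E)‖ * ‖(A.symm : E →L[ℝ] E)‖ ∧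
    Real.sin (angle (A x) (A y)) ≤
      ‖(A : E →L[ℝ] E)‖ * ‖(A.symm : E →L[ℝ] E)‖ * Real.sin (angle x y) := by
  have hAx : 0 < ‖A x‖ := norm_pos_iff.2 (by simpa using hx)
  have hAy : A y ≠ 0 := by simpa using hy
  have hx' : 0 < ‖x‖ := norm_pos_iff.2 hx
  have b1 : ∀ z, ‖A z‖ ≤ ‖(A : E →L[ℝ] E)‖ * ‖z‖ := fun z => (A : E →L[ℝ] E).le_opNorm z
  have b2 : ‖x‖ ≤ ‖(A.symm : E →L[ℝ] E)‖ * ‖A x‖ := by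
    simpa using (A.symm : E →L[ℝ] E).le_opNorm (A x)
  have hs := sin_angle_nonneg x y
  constructor
  · refine le_of_mul_le_mul_right ?_ hAx
    calc 1 * ‖A x‖ = ‖A x‖ := one_mul _
      _ ≤ ‖(A : E →L[ℝ] E)‖ * ‖x‖ := b1 x
      _ ≤ ‖(A : E →L[ℝ] E)‖ * (‖(A.symm : E →L[ℝ] E)‖ * ‖A x‖) := by gcongr
      _ = _ := by ring
  · obtain ⟨t, ht⟩ := aux_eq x y hy
    refine le_of_mul_le_mul_right ?_ hAx
    calc Real.sin (angle (A x) (A y)) * ‖A x‖ ≤ ‖A x - t • A y‖ := aux_le _ _ hAy t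
      _ = ‖A (x - t • y)‖ := by simp
      _ ≤ ‖(A : E →L[ℝ] E)‖ * ‖x - t • y‖ := b1 _
      _ = ‖(A : E →L[ℝ] E)‖ * (Real.sin (angle x y) * ‖x‖) := by rw [ht]
      _ ≤ ‖(A : E →L[ℝ] E)‖ * (Real.sin (angle x y) * (‖(A.symm : E →L[ℝ] E)‖ * ‖A x‖)) := by
        gcongr
      _ = _ := by ring

lemma aux_angle {a b L K : ℝ} (ha : a ∈ Set.Icc 0 (π / 2)) (hb : b ∈ Set.Icc 0 (π / 2))
    (hK : K ≤ Real.exp L / Real.exp 4) (h : Real.sin b ≤ K * Real.sin a) :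
    b ≤ Real.exp L * a := by
  have h1 := Real.mul_le_sin hb.1 hb.2
  have h2 := Real.sin_le ha.1
  have h3 : 0 ≤ Real.sin a := Real.sin_nonneg_of_nonneg_of_le_pi ha.1 (by linarith [ha.2, pi_pos])
  have h4 : (5 : ℝ) ≤ Real.exp 4 := by linarith [Real.add_one_le_exp (4 : ℝ)]
  have hp := pi_pos
  have hp4 := pi_le_four
  have h5 : b = π / 2 * (2 / π * b) := by field_simp
  have h6 : 0 < Real.exp L := Real.exp_pos L
  calc b = π / 2 * (2 / π * b) := h5
    _ ≤ π / 2 * (K * Real.sin a) := mul_le_mul_of_nonneg_left (h1.trans h) (by positivity)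
    _ ≤ Real.exp 4 * (Real.exp L / Real.exp 4 * Real.sin a) := by
      have : K * Real.sin a ≤ Real.exp L / Real.exp 4 * Real.sin a := by gcongr
      have h7 : 0 ≤ Real.exp L / Real.exp 4 * Real.sin a := by positivity
      calc _ ≤ π / 2 * (Real.exp L / Real.exp 4 * Real.sin a) := by gcongr
        _ ≤ _ := by gcongr; linarith
    _ = Real.exp L * Real.sin a := by field_simp
    _ ≤ Real.exp L * a := by gcongr

/-- One-step angle-distortion estimate for a continuous linear equivalence
`A : E ≃L[ℝ] E` of a real inner product space: for linearly independent `v₁, v₂`,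
`‖A‖⁻² ‖A⁻¹‖⁻² sin ∠(v₁,v₂) ≤ sin ∠(A v₁, A v₂) ≤ ‖A‖² ‖A⁻¹‖² sin ∠(v₁,v₂)`, and consequently,
with `L := 4 (log max(‖A‖,‖A⁻¹‖) + 1)`, if both `∠(v₁,v₂)` and `∠(A v₁, A v₂)` lie in
`[0, π/2]`, then `exp (−L) ∠(v₁,v₂) ≤ ∠(A v₁, A v₂) ≤ exp L ∠(v₁,v₂)`. -/
theorem stmt1 {E : Type*} [NormedAddCommGroup E] [InnerProductSpace ℝ E]
    (A : E ≃L[ℝ] E) (v₁ v₂ : E) (hli : LinearIndependent ℝ ![v₁, v₂])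
    (L : ℝ)
    (hL : L = 4 * (Real.log (max ‖(A : E →L[ℝ] E)‖ ‖(A.symm : E →L[ℝ] E)‖) + 1)) :
    ((‖(A : E →L[ℝ] E)‖ ^ 2)⁻¹ * (‖(A.symm : E →L[ℝ] E)‖ ^ 2)⁻¹ * Real.sin (angle v₁ v₂)
        ≤ Real.sin (angle (A v₁) (A v₂)) ∧
      Real.sin (angle (A v₁) (A v₂))
        ≤ ‖(A : E →L[ℝ] E)‖ ^ 2 * ‖(A.symm : E →L[ℝ] E)‖ ^ 2 * Real.sin (angle v₁ v₂)) ∧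
    (angle v₁ v₂ ∈ Set.Icc 0 (π / 2) → angle (A v₁) (A v₂) ∈ Set.Icc 0 (π / 2) →
      Real.exp (-L) * angle v₁ v₂ ≤ angle (A v₁) (A v₂) ∧
        angle (A v₁) (A v₂) ≤ Real.exp L * angle v₁ v₂) := by
  have hx : v₁ ≠ 0 := by simpa using hli.ne_zero 0
  have hy : v₂ ≠ 0 := by simpa using hli.ne_zero 1
  obtain ⟨hK, hU⟩ := aux_sin A v₁ v₂ hx hy
  obtain ⟨-, hD⟩ := aux_sin A.symm (A v₁) (A v₂) (by simpa using hx) (by simpa using hy)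
  simp only [ContinuousLinearEquiv.symm_apply_apply, ContinuousLinearEquiv.symm_symm] at hD
  have hs := sin_angle_nonneg v₁ v₂
  have hs' := sin_angle_nonneg (A v₁) (A v₂)
  have ha := norm_nonneg (A : E →L[ℝ] E)
  have hb := norm_nonneg (A.symm : E →L[ℝ] E)
  generalize ‖(A : E →L[ℝ] E)‖ = a at *
  generalize ‖(A.symm : E →L[ℝ] E)‖ = b at *
  rw [mul_comm b a] at hD
  have hK2 : a * b ≤ a ^ 2 * b ^ 2 := by nlinarith
  have hD2 : Real.sin (angle v₁ v₂) ≤ a ^ 2 * b ^ 2 * Real.sin (angle (A v₁) (A v₂)) :=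
    hD.trans (by gcongr)
  have hU2 : Real.sin (angle (A v₁) (A v₂)) ≤ a ^ 2 * b ^ 2 * Real.sin (angle v₁ v₂) :=
    hU.trans (by gcongr)
  refine ⟨⟨?_, hU2⟩, ?_⟩
  · rw [← mul_inv]
    exact inv_mul_le_of_le_mul₀ (by positivity) hs' hD2
  · intro h1 h2
    have hM : 0 < max a b := by
      by_contra hcon
      have : a ≤ 0 := (le_max_left a b).trans (not_lt.1 hcon)
      nlinarith
    have hE : a ^ 2 * b ^ 2 ≤ Real.exp L / Real.exp 4 := by
      rw [← Real.exp_sub, hL]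
      have : 4 * (Real.log (max a b) + 1) - 4 = (4 : ℕ) * Real.log (max a b) := by
        push_cast; ring
      rw [this, Real.exp_nat_mul, Real.exp_log hM]
      calc a ^ 2 * b ^ 2 ≤ (max a b) ^ 2 * (max a b) ^ 2 := by
            gcongr
            · exact le_max_left a b
            · exact le_max_right a b
        _ = _ := by ring
    refine ⟨?_, aux_angle h1 h2 hE hU2⟩
    rw [Real.exp_neg]
    exact inv_mul_le_of_le_mul₀ (Real.exp_pos L).le h2.1 (aux_angle h2 h1 hE hD2)
end

section
/- Let E be a real inner product space, let θ ∈ (0, π/2], and let v₁, v₂ ∈ E be nonzero vectors such that θ ≤ ∠(v₁, v₂) ≤ π − θ. Then ‖v₁‖ + ‖v₂‖ ≤ √2 · (1 − cos θ)^{−1/2} · ‖v₁ + v₂‖. -/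
open Real InnerProductGeometry

/-- Let `E` be a real inner product space, `θ ∈ (0, π/2]`, and `v₁, v₂ ∈ E`
nonzero vectors with `θ ≤ ∠(v₁, v₂) ≤ π − θ`. Then
`‖v₁‖ + ‖v₂‖ ≤ √2 · (1 − cos θ)^{−1/2} · ‖v₁ + v₂‖`. -/
theorem stmt2 {E : Type*} [NormedAddCommGroup E] [InnerProductSpace ℝ E]
    (θ : ℝ) (hθ : θ ∈ Set.Ioc 0 (π / 2)) (v₁ v₂ : E) (hv₁ : v₁ ≠ 0) (hv₂ : v₂ ≠ 0)
    (h₁ : θ ≤ angle v₁ v₂) (h₂ : angle v₁ v₂ ≤ π - θ) :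
    ‖v₁‖ + ‖v₂‖ ≤ Real.sqrt 2 * (1 - Real.cos θ) ^ (-(1 : ℝ) / 2) * ‖v₁ + v₂‖ := by
  obtain ⟨hθ0, hθ2⟩ := hθ
  have hpi := Real.pi_pos
  have hc1 : Real.cos θ < 1 := by
    have := Real.cos_lt_cos_of_nonneg_of_le_pi le_rfl (by linarith : θ ≤ π) hθ0
    simpa using this
  have hc0 : -1 ≤ Real.cos θ := Real.neg_one_le_cos θ
  have hcos : -Real.cos θ ≤ Real.cos (angle v₁ v₂) := by
    rw [← Real.cos_pi_sub]
    exact Real.cos_le_cos_of_nonneg_of_le_pi (angle_nonneg _ _) (by linarith) h₂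
  have hin := cos_angle_mul_norm_mul_norm v₁ v₂
  have hsq := norm_add_sq_real v₁ v₂
  have hab : 0 ≤ ‖v₁‖ * ‖v₂‖ := by positivity
  have hd : 0 < 1 - Real.cos θ := by linarith
  have key : (‖v₁‖ + ‖v₂‖) ^ 2 * (1 - Real.cos θ) ≤ 2 * ‖v₁ + v₂‖ ^ 2 := by
    have e1 := mul_le_mul_of_nonneg_right hcos hab
    have e2 := mul_nonneg (by linarith : 0 ≤ 1 + Real.cos θ) (sq_nonneg (‖v₁‖ - ‖v₂‖))
    rw [hsq]
    nlinarith
  have hr : (1 - Real.cos θ) ^ (-(1 : ℝ) / 2) = (Real.sqrt (1 - Real.cos θ))⁻¹ := by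
    rw [Real.sqrt_eq_rpow, ← Real.rpow_neg hd.le]
    norm_num
  have hs : 0 < Real.sqrt (1 - Real.cos θ) := Real.sqrt_pos.mpr hd
  rw [hr, mul_right_comm, ← div_eq_mul_inv, le_div_iff₀ hs]
  refine (sq_le_sq₀ (by positivity) (by positivity)).mp ?_
  rw [mul_pow, mul_pow, Real.sq_sqrt hd.le, Real.sq_sqrt (by norm_num)]
  exact key
end

section
/- Let (X, μ) be a probability space and T : X → X a measurable bijection with measurable inverse such that T preserves μ. For a measurable set A ⊆ X define the backward hitting time τ_A : X → ℕ ∪ {∞} by τ_A(x) := inf { t ∈ ℕ : t ≥ 1 and T^{−t}(x) ∈ A } (with τ_A(x) = ∞ if no such t exists). Then the Lebesgue integral of τ_A over the set T⁻¹(A) \ A (with values in [0,∞]) satisfies ∫_{T⁻¹(A) \ A} τ_A dμ ≤ μ(X \ A), where T⁻¹(A) = { x ∈ X : T(x) ∈ A }. -/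
open MeasureTheory
open scoped ENNReal

/-- Recurrence-time estimate: let `(X, μ)` be a probability space and
`T : X ≃ᵐ X` a measure-preserving measurable bijection. For a measurable set `A`, define the
backward hitting time `τ x := inf { t ∈ ℕ : 1 ≤ t ∧ T⁻ᵗ x ∈ A }` (with value `∞` if no such
`t` exists). Then `∫_{T⁻¹(A) \ A} τ dμ ≤ μ(X \ A)`. -/
theorem stmt6 {X : Type*} [MeasurableSpace X] (μ : Measure X) [IsProbabilityMeasure μ]
    (T : X ≃ᵐ X) (hT : MeasurePreserving (⇑T) μ μ)
    (A : Set X) (hA : MeasurableSet A)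
    (τ : X → ℝ≥0∞)
    (hτ : ∀ x, τ x = sInf ((fun t : ℕ => (t : ℝ≥0∞)) ''
      {t : ℕ | 1 ≤ t ∧ (⇑T.symm)^[t] x ∈ A})) :
    ∫⁻ x in (⇑T ⁻¹' A) \ A, τ x ∂μ ≤ μ (Set.univ \ A) := by
  classical
  let E : ℕ → Set X := fun t => {x | T x ∈ A ∧ ∀ s ≤ t, (⇑T.symm)^[s] x ∉ A}
  have hE : ∀ t, MeasurableSet (E t) := by
    intro t
    have h1 : E t = (⇑T ⁻¹' A) ∩ ⋂ s, ⋂ (_ : s ≤ t), ((⇑T.symm)^[s] ⁻¹' A)ᶜ := by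
      ext x
      simp [E]
    rw [h1]
    refine (T.measurable hA).inter ?_
    refine MeasurableSet.iInter fun s => MeasurableSet.iInter fun _ => ?_
    exact ((T.symm.measurable.iterate s) hA).compl
  have hpt : ∀ x ∈ (⇑T ⁻¹' A) \ A, τ x ≤ ∑' t, (E t).indicator (fun _ => (1 : ℝ≥0∞)) x := by
    rintro x ⟨hx1, hx2⟩
    by_cases h : ∃ t : ℕ, 1 ≤ t ∧ (⇑T.symm)^[t] x ∈ A
    · have h1 : τ x ≤ (Nat.find h : ℝ≥0∞) := by
        rw [hτ]
        exact sInf_le ⟨_, Nat.find_spec h, rfl⟩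
      have h2 : ∑ t ∈ Finset.range (Nat.find h), (E t).indicator (fun _ => (1 : ℝ≥0∞)) x
          = (Nat.find h : ℝ≥0∞) := by
        rw [Finset.sum_congr rfl (g := fun _ => (1 : ℝ≥0∞))]
        · simp
        · intro t ht
          refine Set.indicator_of_mem (s := E t) (a := x) (show x ∈ E t from ?_) _
          refine ⟨hx1, fun s hs hsA => ?_⟩
          have hlt : s < Nat.find h := lt_of_le_of_lt hs (Finset.mem_range.1 ht)
          rcases Nat.eq_zero_or_pos s with h0 | h0
          · subst h0
            exact hx2 hsA
          · exact Nat.find_min h hlt ⟨h0, hsA⟩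
      calc τ x ≤ _ := h1
        _ = _ := h2.symm
        _ ≤ _ := ENNReal.sum_le_tsum _
    · have h2 : ∀ t, (E t).indicator (fun _ => (1 : ℝ≥0∞)) x = 1 := by
        intro t
        refine Set.indicator_of_mem (s := E t) (a := x) (show x ∈ E t from ?_) _
        refine ⟨hx1, fun s hs hsA => ?_⟩
        rcases Nat.eq_zero_or_pos s with h0 | h0
        · subst h0
          exact hx2 hsA
        · exact h ⟨s, h0, hsA⟩
      simp only [h2]
      rw [ENNReal.tsum_const_eq_top_of_ne_zero one_ne_zero]
      exact le_top
  have hinv : ∀ (t s : ℕ) (y : X), (⇑T.symm)^[s] ((⇑T)^[t + s] y) = (⇑T)^[t] y := by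
    intro t s y
    rw [add_comm, Function.iterate_add_apply]
    exact (Function.LeftInverse.iterate T.symm_apply_apply s) _
  have hF : ∀ t y, y ∈ (⇑T)^[t] ⁻¹' E t → (⇑T)^[t + 1] y ∈ A ∧ ∀ j ≤ t, (⇑T)^[j] y ∉ A := by
    rintro t y ⟨h1, h2⟩
    refine ⟨by rw [Function.iterate_succ_apply']; exact h1, fun j hj => ?_⟩
    have h3 := h2 (t - j) (Nat.sub_le _ _)
    have h4 := hinv j (t - j) y
    rw [Nat.add_sub_cancel' hj] at h4
    rwa [h4] at h3
  have hdisj : Pairwise (Function.onFun Disjoint fun t => (⇑T)^[t] ⁻¹' E t) := by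
    have key : ∀ i j, i < j → Disjoint ((⇑T)^[i] ⁻¹' E i) ((⇑T)^[j] ⁻¹' E j) := by
      intro i j hij
      rw [Set.disjoint_left]
      intro y hi hj
      exact (hF j y hj).2 (i + 1) hij (hF i y hi).1
    intro i j hij
    rcases lt_or_gt_of_ne hij with h | h
    · exact key i j h
    · exact (key j i h).symm
  calc ∫⁻ x in (⇑T ⁻¹' A) \ A, τ x ∂μ
      ≤ ∫⁻ x in (⇑T ⁻¹' A) \ A, ∑' t, (E t).indicator (fun _ => (1 : ℝ≥0∞)) x ∂μ :=
        setLIntegral_mono' ((T.measurable hA).diff hA) hpt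
    _ ≤ ∫⁻ x, ∑' t, (E t).indicator (fun _ => (1 : ℝ≥0∞)) x ∂μ := setLIntegral_le_lintegral _ _
    _ = ∑' t, μ (E t) := by
        rw [lintegral_tsum fun t => (measurable_const.indicator (hE t)).aemeasurable]
        simp [lintegral_indicator, hE]
    _ = ∑' t, μ ((⇑T)^[t] ⁻¹' E t) := by
        congr 1
        ext t
        exact ((hT.iterate t).measure_preimage (hE t).nullMeasurableSet).symm
    _ = μ (⋃ t, (⇑T)^[t] ⁻¹' E t) :=
        (measure_iUnion hdisj fun t => (T.measurable.iterate t) (hE t)).symm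
    _ ≤ μ (Set.univ \ A) := by
        refine measure_mono (Set.iUnion_subset fun t y hy => ⟨trivial, ?_⟩)
        exact (hF t y hy).2 0 (Nat.zero_le _)
end

section
/- Let (Ω, ν) be a probability space and T : Ω → Ω an invertible measure-preserving transformation (a measurable bijection with measurable inverse preserving ν). Let φ : Ω → ℝ be measurable and essentially bounded, and let A, B, β, κ ∈ ℝ with B ≤ A, β < A, and 0 ≤ κ ≤ 1, such that φ(x) ≥ B for ν-almost every x and ν({ x : φ(x) ≥ A }) ≥ κ. For j ∈ ℕ define the Birkhoff sums φ_j(x) := ∑_{i=0}^{j−1} φ(Tⁱ x). Then ν({ x : for all j ∈ ℕ, φ_j(x) ≥ β·j }) ≥ (κ·A + (1−κ)·B − β) / (A − β). -/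
open MeasureTheory

noncomputable def plissF {Ω : Type*} (T : Ω → Ω) (ψ : Ω → ℝ) : ℕ → Ω → ℝ
  | 0 => fun _ => 0
  | n + 1 => fun x => min 0 (ψ x + plissF T ψ n (T x))

lemma plissF_anti {Ω : Type*} (T : Ω → Ω) (ψ : Ω → ℝ) (n : ℕ) :
    ∀ x, plissF T ψ (n + 1) x ≤ plissF T ψ n x := by
  induction n with
  | zero => intro x; simp [plissF]
  | succ n ih =>
    intro x
    have := ih (T x)
    exact min_le_min le_rfl (add_le_add le_rfl this)

lemma plissF_le_sum {Ω : Type*} (T : Ω → Ω) (ψ : Ω → ℝ) (n : ℕ) :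
    ∀ x, plissF T ψ n x ≤ ∑ i ∈ Finset.range n, ψ (T^[i] x) := by
  induction n with
  | zero => intro x; simp [plissF]
  | succ n ih =>
    intro x
    have := ih (T x)
    rw [Finset.sum_range_succ']
    simp only [Function.iterate_succ, Function.comp, Function.iterate_zero, id]
    rw [plissF]
    exact (min_le_right _ _).trans (by linarith)

lemma plissF_meas {Ω : Type*} [MeasurableSpace Ω] (T : Ω → Ω) (hT : Measurable T) (ψ : Ω → ℝ)
    (hψ : Measurable ψ) (n : ℕ) : Measurable (plissF T ψ n) := by
  induction n with
  | zero => exact measurable_const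
  | succ n ih => exact measurable_const.min (hψ.add (ih.comp hT))

lemma plissF_int {Ω : Type*} [MeasurableSpace Ω] (ν : Measure Ω) [IsProbabilityMeasure ν]
    (T : Ω → Ω) (hT : MeasurePreserving T ν ν) (ψ : Ω → ℝ)
    (hψ : Integrable ψ ν) (n : ℕ) : Integrable (plissF T ψ n) ν := by
  induction n with
  | zero => exact integrable_const _
  | succ n ih =>
    exact (integrable_const (0:ℝ)).inf (hψ.add (hT.integrable_comp_of_integrable ih))

lemma pliss_step {Ω : Type*} [MeasurableSpace Ω] (ν : Measure Ω) [IsProbabilityMeasure ν]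
    (T : Ω → Ω) (hT : MeasurePreserving T ν ν) (ψ : Ω → ℝ) (hm : Measurable ψ)
    (hψ : Integrable ψ ν) (D : ℝ) (hD : 0 ≤ D) (hle : ∀ x, ψ x ≤ D) (n : ℕ) :
    ∫ x, ψ x ∂ν ≤ D * ν.real {x | 0 ≤ plissF T ψ n x} := by
  have hf := plissF_int ν T hT ψ hψ
  have hfm := plissF_meas T hT.measurable ψ hm
  have hS : MeasurableSet {x | 0 ≤ plissF T ψ n x} := measurableSet_le measurable_const (hfm n)
  have hc : ∫ x, plissF T ψ n (T x) ∂ν = ∫ x, plissF T ψ n x ∂ν := by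
    have h := integral_map (μ := ν) hT.measurable.aemeasurable
      (f := plissF T ψ n) (hfm n).aestronglyMeasurable
    rw [hT.map_eq] at h
    exact h.symm
  have h0 : ∀ m x, plissF T ψ m x ≤ 0 := by
    intro m x
    cases m with
    | zero => exact le_rfl
    | succ m => exact min_le_left _ _
  have hci : Integrable (fun x => plissF T ψ n (T x)) ν := hT.integrable_comp_of_integrable (hf n)
  have key : ∫ x, (ψ x + plissF T ψ n (T x) - plissF T ψ n x) ∂ν
      ≤ ∫ x, Set.indicator {x | 0 ≤ plissF T ψ n x} (fun _ => D) x ∂ν := by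
    have h2 : ∫ x, (ψ x + plissF T ψ n (T x) - plissF T ψ n x) ∂ν
      ≤ ∫ x, (ψ x + plissF T ψ n (T x) - plissF T ψ (n + 1) x) ∂ν := by
      apply integral_mono ((hψ.add hci).sub (hf n)) ((hψ.add hci).sub (hf (n+1)))
      intro x
      have := plissF_anti T ψ n x
      simp only [Pi.add_apply, Pi.sub_apply]
      linarith
    refine h2.trans ?_
    apply integral_mono ((hψ.add hci).sub (hf (n+1)))
      ((integrable_const D).indicator hS)
    intro x
    simp only [Pi.add_apply, Pi.sub_apply]
    have h3 := plissF_anti T ψ n x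
    have h4 := h0 n (T x)
    have h5 := hle x
    rw [Set.indicator_apply]
    rcases le_total 0 (ψ x + plissF T ψ n (T x)) with h | h
    · have e : plissF T ψ (n + 1) x = 0 := min_eq_left h
      rw [if_pos (by simp only [Set.mem_ofPred_eq]; linarith)]
      linarith
    · have e : plissF T ψ (n + 1) x = ψ x + plissF T ψ n (T x) := min_eq_right h
      split_ifs <;> linarith
  rw [integral_indicator_const _ hS,
    integral_sub (f := fun x => ψ x + plissF T ψ n (T x)) (hψ.add hci) (hf n),
    integral_add hψ hci, hc, smul_eq_mul] at key
  linarith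

/-- Pliss-point measure estimate: let `(Ω, ν)` be a probability space,
`T : Ω ≃ᵐ Ω` an invertible measure-preserving transformation, and `φ : Ω → ℝ` measurable and
essentially bounded. Let `A, B, β, κ ∈ ℝ` with `B ≤ A`, `β < A`, `0 ≤ κ ≤ 1`, such that
`φ ≥ B` ν-a.e. and `ν {φ ≥ A} ≥ κ`. Then, with Birkhoff sums `φ_j(x) = ∑_{i<j} φ(Tⁱ x)`,
`ν { x : ∀ j, φ_j(x) ≥ β j } ≥ (κ A + (1−κ) B − β) / (A − β)`. -/
theorem stmt7 {Ω : Type*} [MeasurableSpace Ω] (ν : Measure Ω) [IsProbabilityMeasure ν]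
    (T : Ω ≃ᵐ Ω) (hT : MeasurePreserving (⇑T) ν ν)
    (φ : Ω → ℝ) (hmeas : Measurable φ) (hbdd : ∃ Cb : ℝ, ∀ᵐ x ∂ν, |φ x| ≤ Cb)
    (A B β κ : ℝ) (hBA : B ≤ A) (hβA : β < A) (hκ0 : 0 ≤ κ) (hκ1 : κ ≤ 1)
    (hB : ∀ᵐ x ∂ν, B ≤ φ x)
    (hA : ENNReal.ofReal κ ≤ ν {x | A ≤ φ x}) :
    ENNReal.ofReal ((κ * A + (1 - κ) * B - β) / (A - β))
      ≤ ν {x | ∀ j : ℕ, β * j ≤ ∑ i ∈ Finset.range j, φ ((⇑T)^[i] x)} := by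
  obtain ⟨C, hC⟩ := hbdd
  set ψ : Ω → ℝ := fun x => min (φ x) A - β with hψdef
  have hφi : Integrable φ ν := Integrable.of_bound hmeas.aestronglyMeasurable C
    (by simpa [Real.norm_eq_abs] using hC)
  have hmini : Integrable (fun x => min (φ x) A) ν := hφi.inf (integrable_const A)
  have hψi : Integrable ψ ν := hmini.sub (integrable_const β)
  have hψm : Measurable ψ := (hmeas.min measurable_const).sub measurable_const
  have hD : 0 < A - β := by linarith
  have hstep := pliss_step ν T hT ψ hψm hψi (A - β) hD.le
    (fun x => sub_le_sub_right (min_le_right _ _) _)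
  have hSA : MeasurableSet {x | A ≤ φ x} := measurableSet_le measurable_const hmeas
  have hm : κ ≤ ν.real {x | A ≤ φ x} :=
    (ENNReal.ofReal_le_iff_le_toReal (measure_ne_top _ _)).1 hA
  have hlow : κ * A + (1 - κ) * B - β ≤ ∫ x, ψ x ∂ν := by
    have h1 : ∫ x, ((B - β) + Set.indicator {x | A ≤ φ x} (fun _ => A - B) x) ∂ν
        ≤ ∫ x, ψ x ∂ν := by
      apply integral_mono_ae ((integrable_const _).add ((integrable_const _).indicator hSA)) hψi
      filter_upwards [hB] with x hx
      rw [Pi.add_apply, Set.indicator_apply]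
      simp only [hψdef, Set.mem_ofPred_eq]
      split_ifs with h
      · rw [min_eq_right h]; linarith
      · rw [min_eq_left (not_le.1 h).le]; linarith
    rw [integral_add (integrable_const _) ((integrable_const _).indicator hSA),
      integral_indicator_const _ hSA] at h1
    simp only [integral_const, probReal_univ, smul_eq_mul, one_mul] at h1
    nlinarith [mul_le_mul_of_nonneg_right hm (sub_nonneg.2 hBA)]
  have hsub : (⋂ n, {x | 0 ≤ plissF T ψ n x}) ⊆
      {x | ∀ j : ℕ, β * j ≤ ∑ i ∈ Finset.range j, φ ((⇑T)^[i] x)} := by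
    intro x hx j
    have h1 : 0 ≤ plissF T ψ j x := Set.mem_iInter.1 hx j
    have h2 := plissF_le_sum T ψ j x
    have h3 : ∑ i ∈ Finset.range j, ψ ((⇑T)^[i] x)
        ≤ ∑ i ∈ Finset.range j, (φ ((⇑T)^[i] x) - β) :=
      Finset.sum_le_sum fun i _ => sub_le_sub_right (min_le_left _ _) _
    rw [Finset.sum_sub_distrib (f := fun i => φ ((⇑T)^[i] x))] at h3
    simp only [Finset.sum_const, Finset.card_range, nsmul_eq_mul] at h3
    linarith
  refine le_trans ?_ (measure_mono hsub)
  have hanti : Antitone fun n => {x | 0 ≤ plissF T ψ n x} :=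
    antitone_nat_of_succ_le fun n x hx => le_trans hx (plissF_anti T ψ n x)
  rw [hanti.measure_iInter (fun n => (measurableSet_le measurable_const
    (plissF_meas T T.measurable ψ hψm n)).nullMeasurableSet) ⟨0, measure_ne_top _ _⟩]
  refine le_iInf fun n => ?_
  rw [ENNReal.ofReal_le_iff_le_toReal (measure_ne_top _ _), div_le_iff₀ hD, mul_comm _ (A - β)]
  exact hlow.trans (hstep n)
end

section
/- Let (Ω, ν) be a probability space, T : Ω → Ω an invertible ergodic measure-preserving transformation (a measurable bijection with measurable inverse, preserving ν and ergodic), and Π : Ω → (0, ∞) a measurable function. Fix ε > 0 and define the ε-tempered envelope Π_ε : Ω → (0, ∞] by Π_ε(x) := sup_{n∈ℤ} exp(−|n|·ε)·Π(Tⁿ x). If the function x ↦ log(Π(T x) / Π(x)) is ν-integrable, then Π_ε(x) < ∞ for ν-almost every x. -/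
open MeasureTheory
open scoped ENNReal

/-- The integral of an integrable coboundary vanishes. -/
lemma cob_integral_zero {Ω : Type*} [MeasurableSpace Ω] (ν : Measure Ω) [IsProbabilityMeasure ν]
    (T : Ω → Ω) (hT : MeasurePreserving T ν ν) (f : Ω → ℝ) (hf : Measurable f)
    (hint : Integrable (fun x => f (T x) - f x) ν) : ∫ x, (f (T x) - f x) ∂ν = 0 := by
  let F : ℕ → Ω → ℝ := fun K x => max (-(K : ℝ)) (min (K : ℝ) (f x))
  have hFm : ∀ K, Measurable (F K) := fun K => by
    exact measurable_const.max (measurable_const.min hf)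
  have hFi : ∀ K, Integrable (F K) ν := fun K => by
    refine Integrable.of_bound (hFm K).aestronglyMeasurable (K : ℝ) (Filter.Eventually.of_forall ?_)
    intro x
    have : (0 : ℝ) ≤ K := Nat.cast_nonneg K
    rw [Real.norm_eq_abs, abs_le]
    exact ⟨le_max_left _ _, max_le (by linarith) (min_le_left _ _)⟩
  have hlim : Filter.Tendsto (fun K => ∫ x, (F K (T x) - F K x) ∂ν) Filter.atTop
      (nhds (∫ x, (f (T x) - f x) ∂ν)) := by
    refine tendsto_integral_of_dominated_convergence (fun x => ‖f (T x) - f x‖) ?_ hint.norm ?_ ?_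
    · intro K
      exact (((hFm K).comp hT.measurable).sub (hFm K)).aestronglyMeasurable
    · intro K
      refine Filter.Eventually.of_forall fun x => ?_
      simp only [Real.norm_eq_abs, F]
      have h1 := abs_max_sub_max_le_abs (min (K : ℝ) (f (T x))) (min (K : ℝ) (f x)) (-(K : ℝ))
      have h2 := abs_min_sub_min_le_max (K : ℝ) (f (T x)) (K : ℝ) (f x)
      rw [max_comm (-(K : ℝ)), max_comm (-(K : ℝ))]
      refine h1.trans (h2.trans ?_)
      simp
    · refine Filter.Eventually.of_forall fun x => ?_
      have key : ∀ y, Filter.Tendsto (fun K => F K y) Filter.atTop (nhds (f y)) := by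
        intro y
        obtain ⟨N, hN⟩ := exists_nat_ge |f y|
        refine tendsto_const_nhds.congr' ?_
        filter_upwards [Filter.eventually_ge_atTop N] with K hK
        have hK' : (N : ℝ) ≤ K := by exact_mod_cast hK
        have := abs_le.1 (hN.trans hK')
        simp only [F]
        rw [min_eq_right this.2, max_eq_right this.1]
      exact (key _).sub (key _)
  refine tendsto_nhds_unique hlim ?_
  have : (fun K => ∫ x, (F K (T x) - F K x) ∂ν) = fun _ => 0 := by
    funext K
    have hc : Integrable (fun x => F K (T x)) ν := hT.integrable_comp_of_integrable (hFi K)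
    rw [integral_sub hc (hFi K)]
    have : ∫ x, F K (T x) ∂ν = ∫ x, F K x ∂ν := by
      have h := integral_map (μ := ν) hT.measurable.aemeasurable
        (f := F K) (hFm K).aestronglyMeasurable
      rw [hT.map_eq] at h
      exact h.symm
    rw [this, sub_self]
  rw [this]
  exact tendsto_const_nhds

/-- Garsia's partial maxima. -/
def garsiaMax {Ω : Type*} (T : Ω → Ω) (h : Ω → ℝ) : ℕ → Ω → ℝ
  | 0 => fun _ => 0
  | N + 1 => fun x => max 0 (h x + garsiaMax T h N (T x))

lemma bdd_one_sided {Ω : Type*} [MeasurableSpace Ω] (ν : Measure Ω) [IsProbabilityMeasure ν]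
    (T : Ω → Ω) (hT : Ergodic T ν) (f : Ω → ℝ) (hf : Measurable f) (ε : ℝ) (hε : 0 < ε)
    (hint : Integrable (fun x => f (T x) - f x) ν) :
    ∀ᵐ x ∂ν, ∃ C : ℕ, ∀ n : ℕ, f (T^[n] x) - ε * n ≤ C := by
  have hmp := hT.toMeasurePreserving
  let A : Set Ω := {x | ∃ C : ℕ, ∀ n : ℕ, f (T^[n] x) - ε * n ≤ C}
  have hA : MeasurableSet A := by
    have : A = ⋃ C : ℕ, ⋂ n : ℕ, {x | f (T^[n] x) - ε * n ≤ C} := by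
      ext x; simp [A]
    rw [this]
    refine MeasurableSet.iUnion fun C => MeasurableSet.iInter fun n => ?_
    exact measurableSet_le ((hf.comp (hmp.measurable.iterate n)).sub_const _) measurable_const
  have hinv : T ⁻¹' A = A := by
    ext x
    constructor
    · rintro ⟨C, hC⟩
      obtain ⟨D, hD⟩ := exists_nat_ge (max (C : ℝ) (f x))
      refine ⟨D, fun n => ?_⟩
      rcases n with _ | n
      · simpa using (le_max_right _ _).trans hD
      · have h1 := hC n
        rw [← Function.iterate_succ_apply] at h1
        have h2 := (le_max_left _ _).trans hD
        push_cast
        linarith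
    · rintro ⟨C, hC⟩
      obtain ⟨D, hD⟩ := exists_nat_ge ((C : ℝ) + ε)
      refine ⟨D, fun n => ?_⟩
      have h1 := hC (n + 1)
      rw [Function.iterate_succ_apply] at h1
      push_cast at h1
      linarith
  rcases hT.toPreErgodic.ae_mem_or_ae_notMem hA hinv with h | h
  · exact h
  exfalso
  let h0 : Ω → ℝ := fun x => f (T x) - f x - ε
  have hh0 : Integrable h0 ν := hint.sub (integrable_const ε)
  let M := garsiaMax T h0
  have hMs : ∀ N x, M (N + 1) x = max 0 (h0 x + M N (T x)) := fun _ _ => rfl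
  have hMi : ∀ N, Integrable (M N) ν := by
    intro N
    induction N with
    | zero => exact integrable_zero _ _ _
    | succ N ih =>
      exact (integrable_zero _ _ _).sup (hh0.add (hmp.integrable_comp_of_integrable ih))
  have hM0 : ∀ N x, 0 ≤ M N x := by
    intro N x
    rcases N with _ | N
    · exact le_rfl
    · exact le_max_left _ _
  have hMmono1 : ∀ N x, M N x ≤ M (N + 1) x := by
    intro N
    induction N with
    | zero => intro x; exact hM0 1 x
    | succ N ih =>
      intro x
      rw [hMs, hMs (N + 1)]
      have := ih (T x)
      exact max_le_max le_rfl (by linarith)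
  have hMmono : ∀ x, Monotone fun N => M N x := fun x => monotone_nat_of_le_succ fun N => hMmono1 N x
  have hMge : ∀ n x, f (T^[n] x) - f x - ε * n ≤ M n x := by
    intro n
    induction n with
    | zero => intro x; simp [M, garsiaMax]
    | succ n ih =>
      intro x
      have := ih (T x)
      rw [hMs, Function.iterate_succ_apply]
      refine le_trans ?_ (le_max_right _ _)
      simp only [h0]
      push_cast
      linarith
  have hD : ∀ N x, M (N + 1) x - M N (T x) = max (-M N (T x)) (h0 x) := by
    intro N x
    rw [hMs, ← max_sub_sub_right]
    congr 1 <;> ring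
  have hnonneg : ∀ N, 0 ≤ ∫ x, max (-M N (T x)) (h0 x) ∂ν := by
    intro N
    have e : ∫ x, M N (T x) ∂ν = ∫ x, M N x ∂ν := by
      have h := integral_map (μ := ν) hmp.measurable.aemeasurable
        (f := M N) (by rw [hmp.map_eq]; exact (hMi N).aestronglyMeasurable)
      rw [hmp.map_eq] at h
      exact h.symm
    simp_rw [← hD]
    have hc : Integrable (fun x => M N (T x)) ν := hmp.integrable_comp_of_integrable (hMi N)
    rw [integral_sub (hMi _) hc, e]
    exact sub_nonneg.2 (integral_mono (hMi _) (hMi _) (hMmono1 N))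
  have hlim : Filter.Tendsto (fun N => ∫ x, max (-M N (T x)) (h0 x) ∂ν) Filter.atTop
      (nhds (∫ x, h0 x ∂ν)) := by
    refine tendsto_integral_of_dominated_convergence (fun x => ‖h0 x‖) ?_ hh0.norm ?_ ?_
    · intro N
      exact ((hmp.integrable_comp_of_integrable (hMi N)).neg.sup hh0).aestronglyMeasurable
    · intro N
      refine Filter.Eventually.of_forall fun x => ?_
      rw [Real.norm_eq_abs, Real.norm_eq_abs, abs_le]
      have := hM0 N (T x)
      exact ⟨(neg_abs_le _).trans (le_max_right _ _),
        max_le (by linarith [abs_nonneg (h0 x)]) (le_abs_self _)⟩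
    · filter_upwards [h] with x hx
      have hx' : T x ∉ A := fun hh => hx (by rw [← hinv]; exact hh)
      obtain ⟨C, hC⟩ := exists_nat_ge (f (T x) - h0 x)
      have : ∃ n : ℕ, (C : ℝ) < f (T^[n] (T x)) - ε * n := by
        by_contra hcon
        push Not at hcon
        exact hx' ⟨C, hcon⟩
      obtain ⟨n, hn⟩ := this
      refine tendsto_const_nhds.congr' ?_
      filter_upwards [Filter.eventually_ge_atTop n] with N hN
      have h1 := hMge n (T x)
      have h2 : M n (T x) ≤ M N (T x) := hMmono (T x) hN
      rw [max_eq_right]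
      linarith
  have h1 : 0 ≤ ∫ x, h0 x ∂ν := ge_of_tendsto' hlim hnonneg
  have h2 : ∫ x, h0 x ∂ν = -ε := by
    simp only [h0]
    rw [integral_sub hint (integrable_const ε), cob_integral_zero ν T hmp f hf hint]
    simp
  linarith

/-- Finiteness of the ε-tempered envelope: let `(Ω, ν)` be a probability
space, `T : Ω ≃ᵐ Ω` an invertible ergodic measure-preserving transformation, and
`P : Ω → (0, ∞)` measurable. Fix `ε > 0` and let
`P_ε(x) := sup_{n∈ℤ} exp(−|n| ε) · P(Tⁿ x)`. If `x ↦ log (P(T x) / P(x))` is ν-integrable,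
then `P_ε(x) < ∞` for ν-a.e. `x`. -/
theorem stmt8 {Ω : Type*} [MeasurableSpace Ω] (ν : Measure Ω) [IsProbabilityMeasure ν]
    (T : Ω ≃ᵐ Ω) (hT : Ergodic (⇑T) ν)
    (P : Ω → ℝ) (hPmeas : Measurable P) (hPpos : ∀ x, 0 < P x)
    (ε : ℝ) (hε : 0 < ε)
    (hint : Integrable (fun x => Real.log (P (T x) / P x)) ν) :
    ∀ᵐ x ∂ν,
      (⨆ n : ℤ, ENNReal.ofReal (Real.exp (-|(n : ℝ)| * ε) * P ((T.toEquiv ^ n) x))) < ⊤ := by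
  let f : Ω → ℝ := fun x => Real.log (P x)
  have hf : Measurable f := Real.measurable_log.comp hPmeas
  have hint1 : Integrable (fun x => f (T x) - f x) ν := by
    refine hint.congr (Filter.Eventually.of_forall fun x => ?_)
    exact Real.log_div (hPpos _).ne' (hPpos _).ne'
  have hS : Ergodic T.symm ν := by
    refine ⟨hT.toMeasurePreserving.symm T, ⟨fun s hs hinv => ?_⟩⟩
    refine hT.toPreErgodic.aeconst_set hs ?_
    conv_lhs => rw [← hinv]
    ext x
    simp
  have hint2 : Integrable (fun x => f (T.symm x) - f x) ν := by
    refine (hS.toMeasurePreserving.integrable_comp_of_integrable hint1).neg.congr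
      (Filter.Eventually.of_forall fun x => ?_)
    simp
  filter_upwards [bdd_one_sided ν T hT f hf ε hε hint1,
    bdd_one_sided ν T.symm hS f hf ε hε hint2] with x h1 h2
  obtain ⟨C, hC⟩ := h1
  obtain ⟨D, hD⟩ := h2
  refine lt_of_le_of_lt (b := ENNReal.ofReal (Real.exp (max C D : ℝ))) (iSup_le fun n => ?_)
    ENNReal.ofReal_lt_top
  refine ENNReal.ofReal_le_ofReal ?_
  have hp : P ((T.toEquiv ^ n) x) = Real.exp (f ((T.toEquiv ^ n) x)) :=
    (Real.exp_log (hPpos _)).symm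
  rw [hp, ← Real.exp_add, Real.exp_le_exp]
  obtain ⟨m, rfl | rfl⟩ := n.eq_nat_or_neg
  · have e : (T.toEquiv ^ (m : ℤ)) x = T^[m] x := by
      rw [zpow_natCast, Equiv.Perm.coe_pow]; rfl
    have := hC m
    rw [e]
    simp only [Int.cast_natCast, Nat.abs_cast]
    linarith [le_max_left (C : ℝ) D]
  · have e : (T.toEquiv ^ (-(m : ℤ))) x = T.symm^[m] x := by
      rw [zpow_neg, zpow_natCast, ← inv_pow, Equiv.Perm.coe_pow]; rfl
    have := hD m
    rw [e]
    simp only [Int.cast_neg, Int.cast_natCast, abs_neg, Nat.abs_cast]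
    linarith [le_max_right (C : ℝ) D]
end

section
/- Let (Ω, ν) be a probability space, T : Ω → Ω an invertible ergodic measure-preserving transformation (a measurable bijection with measurable inverse, preserving ν and ergodic), and Π : Ω → (0, ∞) a measurable function. Fix ε > 0 and define the ε-tempered envelope Π_ε : Ω → (0, ∞] by Π_ε(x) := sup_{n∈ℤ} exp(−|n|·ε)·Π(Tⁿ x). Suppose there is a constant c₀ > 0 such that exp(−c₀) ≤ Π(T x) / Π(x) ≤ exp(c₀) for every x ∈ Ω. Then for every t > 0, ν({ x : Π_ε(x) > t }) ≤ 4 · max(c₀/ε, 1) · ν({ x : Π(x) > t }). -/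
open MeasureTheory
open scoped ENNReal

noncomputable def garsiaG {Ω : Type*} (S : Ω → Ω) (f : Ω → ℝ) : ℕ → Ω → ℝ
  | 0 => fun _ => 0
  | n + 1 => fun x => max 0 (f x + garsiaG S f n (S x))

lemma garsiaG_nonneg {Ω : Type*} (S : Ω → Ω) (f : Ω → ℝ) (n : ℕ) (x : Ω) :
    0 ≤ garsiaG S f n x := by
  cases n with
  | zero => exact le_rfl
  | succ n => exact le_max_left _ _

lemma garsiaG_le_succ {Ω : Type*} (S : Ω → Ω) (f : Ω → ℝ) (n : ℕ) :
    ∀ x, garsiaG S f n x ≤ garsiaG S f (n + 1) x := by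
  induction n with
  | zero => intro x; exact garsiaG_nonneg S f 1 x
  | succ n ih =>
    intro x
    exact max_le_max le_rfl (add_le_add le_rfl (ih (S x)))

lemma garsiaG_measurable {Ω : Type*} [MeasurableSpace Ω] {S : Ω → Ω} {f : Ω → ℝ}
    (hS : Measurable S) (hf : Measurable f) (n : ℕ) : Measurable (garsiaG S f n) := by
  induction n with
  | zero => exact measurable_const
  | succ n ih => exact measurable_const.max (hf.add (ih.comp hS))

lemma garsiaG_le {Ω : Type*} {S : Ω → Ω} {f : Ω → ℝ} {c : ℝ} (hc : 0 ≤ c)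
    (hf : ∀ x, f x ≤ c) (n : ℕ) : ∀ x, garsiaG S f n x ≤ n * c := by
  induction n with
  | zero => intro x; simp [garsiaG]
  | succ n ih =>
    intro x
    refine max_le (by positivity) ?_
    have := ih (S x)
    have := hf x
    push_cast
    linarith

lemma garsia_max {Ω : Type*} [MeasurableSpace Ω] (ν : Measure Ω) [IsProbabilityMeasure ν]
    {S : Ω → Ω} (hS : MeasurePreserving S ν ν) (A : Set Ω) (hA : MeasurableSet A)
    {c ε : ℝ} (hc : 0 < c) (hε : 0 < ε) (n : ℕ) :
    ν {x | 0 < garsiaG S (fun x => A.indicator (fun _ => c) x - ε) n x}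
      ≤ ENNReal.ofReal (c / ε) * ν A := by
  set f : Ω → ℝ := fun x => A.indicator (fun _ => c) x - ε with hfdef
  have hf : Measurable f := (measurable_const.indicator hA).sub measurable_const
  have hfc : ∀ x, f x ≤ c := by
    intro x
    have : A.indicator (fun _ => c) x ≤ c := Set.indicator_le_self' (fun _ _ => hc.le) x
    simp only [hfdef]; linarith
  set G := garsiaG S f n with hG
  have hGm : Measurable G := garsiaG_measurable hS.measurable hf n
  have hGi : Integrable G ν := by
    refine Integrable.of_bound hGm.aestronglyMeasurable (n * c) (Filter.Eventually.of_forall ?_)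
    intro x
    rw [Real.norm_of_nonneg (garsiaG_nonneg S f n x)]
    exact garsiaG_le hc.le hfc n x
  have hGSi : Integrable (fun x => G (S x)) ν := hS.integrable_comp_of_integrable hGi
  have hint : ∫ x, G (S x) ∂ν = ∫ x, G x ∂ν := by
    conv_rhs => rw [← hS.map_eq]
    rw [integral_map hS.measurable.aemeasurable hGm.aestronglyMeasurable]
  set E : Set Ω := {x | 0 < G x} with hE
  have hEm : MeasurableSet E := measurableSet_lt measurable_const hGm
  have hpt : ∀ x, G x + E.indicator (fun _ => ε) x ≤ A.indicator (fun _ => c) x + G (S x) := by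
    intro x
    have h0 : 0 ≤ G (S x) := garsiaG_nonneg S f n (S x)
    have h1 : 0 ≤ A.indicator (fun _ => c) x := Set.indicator_nonneg (fun _ _ => hc.le) x
    by_cases hx : x ∈ E
    · rw [Set.indicator_of_mem hx]
      have hx' : 0 < G x := hx
      have h2 : G x ≤ max 0 (f x + G (S x)) := garsiaG_le_succ S f n x
      rcases le_max_iff.1 h2 with h | h
      · linarith
      · simp only [hfdef] at h; linarith
    · rw [Set.indicator_of_notMem hx]
      have hx' : ¬ 0 < G x := hx
      linarith
  have hi1 : Integrable (E.indicator (fun _ => ε)) ν := (integrable_const ε).indicator hEm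
  have hi2 : Integrable (A.indicator (fun _ => c)) ν := (integrable_const c).indicator hA
  have hmain := integral_mono (hGi.add hi1) (hi2.add hGSi) hpt
  simp only [Pi.add_apply] at hmain
  rw [integral_add hGi hi1, integral_add hi2 hGSi, hint, integral_indicator_const _ hEm,
    integral_indicator_const _ hA] at hmain
  simp only [smul_eq_mul] at hmain
  have h3 : ν.real E ≤ c / ε * ν.real A := by
    rw [div_mul_eq_mul_div, le_div_iff₀ hε]; linarith
  rw [← ofReal_measureReal (μ := ν) (s := E), ← ofReal_measureReal (μ := ν) (s := A),
    ← ENNReal.ofReal_mul (by positivity)]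
  exact ENNReal.ofReal_le_ofReal h3

lemma garsia_pt {Ω : Type*} {S : Ω → Ω} {p : Ω → ℝ} {c ε : ℝ} (hc : 0 < c)
    (hp : ∀ x, p (S x) ≤ p x + c) (n : ℕ) : ∀ x, p (S^[n] x) - n * ε ≤ max (p x) 0 +
      garsiaG S (fun x => {x | 0 < p x}.indicator (fun _ => c) x - ε) n (S x) := by
  induction n with
  | zero => intro x; simp [garsiaG]
  | succ n ih =>
    intro x
    have h1 := ih (S x)
    rw [Function.iterate_succ_apply]
    have h2 : {x | 0 < p x}.indicator (fun _ => c) (S x) - ε +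
      garsiaG S (fun x => {x | 0 < p x}.indicator (fun _ => c) x - ε) n (S (S x)) ≤
      garsiaG S (fun x => {x | 0 < p x}.indicator (fun _ => c) x - ε) (n + 1) (S x) :=
      le_max_right _ _
    have h3 : max (p (S x)) 0 ≤ max (p x) 0 + {x | 0 < p x}.indicator (fun _ => c) (S x) := by
      by_cases h : 0 < p (S x)
      · rw [Set.indicator_of_mem (by exact h), max_eq_left h.le]
        have := hp x
        have := le_max_left (p x) 0
        linarith
      · rw [Set.indicator_of_notMem (by exact h), max_eq_right (not_lt.1 h)]
        have := le_max_right (p x) 0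
        linarith
    push_cast
    linarith

lemma one_sided {Ω : Type*} [MeasurableSpace Ω] (ν : Measure Ω) [IsProbabilityMeasure ν]
    {S : Ω → Ω} (hS : MeasurePreserving S ν ν) {p : Ω → ℝ} (hpm : Measurable p)
    {c ε : ℝ} (hc : 0 < c) (hε : 0 < ε) (hp : ∀ x, p (S x) ≤ p x + c) :
    ν {x | ∃ n : ℕ, n * ε < p (S^[n] x)}
      ≤ ENNReal.ofReal (1 + c / ε) * ν {x | 0 < p x} := by
  set A : Set Ω := {x | 0 < p x} with hAdef
  have hA : MeasurableSet A := measurableSet_lt measurable_const hpm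
  set f : Ω → ℝ := fun x => A.indicator (fun _ => c) x - ε with hfdef
  have hf : Measurable f := (measurable_const.indicator hA).sub measurable_const
  set E : ℕ → Set Ω := fun n => {x | 0 < garsiaG S f n x} with hE
  have hEm : ∀ n, MeasurableSet (E n) := fun n =>
    measurableSet_lt measurable_const (garsiaG_measurable hS.measurable hf n)
  have hmono : Monotone E := monotone_nat_of_le_succ fun n x hx =>
    lt_of_lt_of_le hx (garsiaG_le_succ S f n x)
  have hsub : {x | ∃ n : ℕ, n * ε < p (S^[n] x)} ⊆ A ∪ S ⁻¹' (⋃ n, E n) := by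
    rintro x ⟨n, hn⟩
    by_cases hx : x ∈ A
    · exact Or.inl hx
    · right
      have hx' : ¬ 0 < p x := hx
      have h := garsia_pt (ε := ε) hc hp n x
      rw [max_eq_right (not_lt.1 hx')] at h
      refine Set.mem_iUnion.2 ⟨n, ?_⟩
      change 0 < garsiaG S f n (S x)
      simp only [hfdef, hAdef]
      linarith
  calc _ ≤ ν (A ∪ S ⁻¹' (⋃ n, E n)) := measure_mono hsub
    _ ≤ ν A + ν (S ⁻¹' (⋃ n, E n)) := measure_union_le _ _
    _ = ν A + ν (⋃ n, E n) := by
      rw [hS.measure_preimage (MeasurableSet.iUnion hEm).nullMeasurableSet]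
    _ ≤ ν A + ENNReal.ofReal (c / ε) * ν A := by
      gcongr
      rw [hmono.measure_iUnion]
      exact iSup_le fun n => garsia_max ν hS A hA hc hε n
    _ = _ := by
      rw [ENNReal.ofReal_add zero_le_one (by positivity), ENNReal.ofReal_one, add_mul, one_mul]

/-- Distribution estimate for the ε-tempered envelope: let `(Ω, ν)` be a
probability space, `T : Ω ≃ᵐ Ω` an invertible ergodic measure-preserving transformation, and
`P : Ω → (0, ∞)` measurable. Fix `ε > 0` and let
`P_ε(x) := sup_{n∈ℤ} exp(−|n| ε) · P(Tⁿ x)`. If `exp(−c₀) ≤ P(T x)/P(x) ≤ exp c₀` for every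
`x`, with `c₀ > 0`, then for every `t > 0`,
`ν { x : P_ε(x) > t } ≤ 4 · max(c₀/ε, 1) · ν { x : P(x) > t }`. -/
theorem stmt9 {Ω : Type*} [MeasurableSpace Ω] (ν : Measure Ω) [IsProbabilityMeasure ν]
    (T : Ω ≃ᵐ Ω) (hT : Ergodic (⇑T) ν)
    (P : Ω → ℝ) (hPmeas : Measurable P) (hPpos : ∀ x, 0 < P x)
    (ε : ℝ) (hε : 0 < ε)
    (c₀ : ℝ) (hc₀ : 0 < c₀)
    (hratio : ∀ x, Real.exp (-c₀) ≤ P (T x) / P x ∧ P (T x) / P x ≤ Real.exp c₀) :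
    ∀ t : ℝ, 0 < t →
      ν {x | ENNReal.ofReal t
          < ⨆ n : ℤ, ENNReal.ofReal (Real.exp (-|(n : ℝ)| * ε) * P ((T.toEquiv ^ n) x))}
        ≤ ENNReal.ofReal (4 * max (c₀ / ε) 1) * ν {x | t < P x} := by
  intro t ht
  set p : Ω → ℝ := fun x => Real.log (P x) - Real.log t with hpdef
  have hpm : Measurable p := (Real.measurable_log.comp hPmeas).sub measurable_const
  have hA : {x | t < P x} = {x | 0 < p x} := by
    ext x
    simp only [Set.mem_setOf_eq, hpdef, sub_pos]
    exact (Real.log_lt_log_iff ht (hPpos x)).symm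
  have hlog : ∀ x, Real.log (P (T x) / P x) = p (T x) - p x := by
    intro x
    rw [Real.log_div (hPpos _).ne' (hPpos _).ne']
    simp only [hpdef]; ring
  have hp1 : ∀ x, p (T x) ≤ p x + c₀ := by
    intro x
    have := (Real.log_le_iff_le_exp (div_pos (hPpos (T x)) (hPpos x))).2 (hratio x).2
    rw [hlog] at this; linarith
  have hp2 : ∀ x, p (T.symm x) ≤ p x + c₀ := by
    intro x
    have := (Real.le_log_iff_exp_le
      (div_pos (hPpos (T (T.symm x))) (hPpos (T.symm x)))).2 (hratio (T.symm x)).1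
    rw [hlog, T.apply_symm_apply] at this; linarith
  have hmp : MeasurePreserving T ν ν := hT.toMeasurePreserving
  have hmp' : MeasurePreserving T.symm ν ν := hmp.symm T
  have b1 := one_sided ν hmp hpm hc₀ hε hp1
  have b2 := one_sided ν hmp' hpm hc₀ hε hp2
  have hit : ∀ (n : ℕ) x, (T.toEquiv ^ n) x = T^[n] x := by
    intro n x
    rw [Equiv.Perm.coe_pow]; rfl
  have hit' : ∀ (n : ℕ) x, ((T.toEquiv ^ n)⁻¹) x = T.symm^[n] x := by
    intro n x
    rw [← inv_pow, Equiv.Perm.coe_pow]; rfl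
  have hcond : ∀ (a : ℝ) y, t < Real.exp (-a * ε) * P y → a * ε < p y := by
    intro a y h
    have h1 := Real.log_lt_log ht h
    rw [Real.log_mul (Real.exp_pos _).ne' (hPpos y).ne', Real.log_exp] at h1
    simp only [hpdef]; linarith
  have hsub : {x | ENNReal.ofReal t
          < ⨆ n : ℤ, ENNReal.ofReal (Real.exp (-|(n : ℝ)| * ε) * P ((T.toEquiv ^ n) x))}
      ⊆ {x | ∃ n : ℕ, n * ε < p (T^[n] x)} ∪ {x | ∃ n : ℕ, n * ε < p (T.symm^[n] x)} := by
    intro x hx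
    rw [Set.mem_ofPred_eq, lt_iSup_iff] at hx
    obtain ⟨n, hn⟩ := hx
    have h1 := hcond _ _ (ENNReal.ofReal_lt_ofReal_iff'.1 hn).1
    obtain ⟨m, rfl | rfl⟩ := n.eq_nat_or_neg
    · left
      refine ⟨m, ?_⟩
      rw [← hit]
      simpa using h1
    · right
      refine ⟨m, ?_⟩
      rw [← hit']
      simpa using h1
  rw [hA]
  refine (measure_mono hsub).trans ((measure_union_le _ _).trans ((add_le_add b1 b2).trans ?_))
  rw [← add_mul, ← ENNReal.ofReal_add (by positivity) (by positivity)]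
  gcongr
  have := le_max_left (c₀ / ε) 1
  have := le_max_right (c₀ / ε) 1
  linarith
end

section
/- Let X be a measurable space and let 𝒜 = (A_1, …, A_p) and ℬ = (B_1, …, B_q) be finite measurable partitions of X (finite families of pairwise disjoint measurable sets whose unions are X). For a finite measure μ on X define the conditional entropy H_μ(𝒜 | ℬ) := ∑_{i=1}^{p} ∑_{j=1}^{q} μ(A_i ∩ B_j) · (log μ(B_j) − log μ(A_i ∩ B_j)), with the convention that summands with μ(A_i ∩ B_j) = 0 are taken to be 0. Then for any two finite measures μ₁, μ₂ on X, H_{μ₁ + μ₂}(𝒜 | ℬ) ≥ H_{μ₁}(𝒜 | ℬ) + H_{μ₂}(𝒜 | ℬ). -/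
open MeasureTheory

/-- Conditional entropy `H_μ(𝒜 | ℬ) = ∑_{i,j} μ(A_i ∩ B_j)·(log μ(B_j) − log μ(A_i ∩ B_j))`
of the finite partition `𝒜` with respect to the finite partition `ℬ`, for a finite measure
`μ` (with the convention that summands with `μ(A_i ∩ B_j) = 0` vanish, via `log 0 = 0` and
`0 · x = 0`). -/
noncomputable def condEntropyFin {X : Type*} [MeasurableSpace X] (μ : Measure X)
    {p q : ℕ} (A : Fin p → Set X) (B : Fin q → Set X) : ℝ :=
  ∑ i, ∑ j, (μ (A i ∩ B j)).toReal *
    (Real.log (μ (B j)).toReal - Real.log (μ (A i ∩ B j)).toReal)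

theorem aux_key {a b s S : ℝ} (ha : 0 ≤ a) (hab : a ≤ b) (hs : 0 < s) (hS : s ≤ S) :
    a * (Real.log b - Real.log a) ≤ a * (Real.log S - Real.log s) + b * s / S - a := by
  have hS0 : 0 < S := hs.trans_le hS
  rcases ha.eq_or_lt with h | h
  · subst h
    have : 0 ≤ b * s / S := by positivity
    simpa using this
  · have hb : 0 < b := h.trans_le hab
    have h1 := Real.log_le_sub_one_of_pos (x := b * s / (a * S)) (by positivity)
    rw [Real.log_div (by positivity) (by positivity), Real.log_mul hb.ne' hs.ne',
      Real.log_mul h.ne' hS0.ne'] at h1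
    have h2 := mul_le_mul_of_nonneg_left h1 ha
    have h3 : a * (b * s / (a * S) - 1) = b * s / S - a := by
      field_simp
    rw [h3] at h2
    linarith

theorem aux_super {a b c d : ℝ} (ha : 0 ≤ a) (hab : a ≤ b) (hc : 0 ≤ c) (hcd : c ≤ d) :
    a * (Real.log b - Real.log a) + c * (Real.log d - Real.log c) ≤
      (a + c) * (Real.log (b + d) - Real.log (a + c)) := by
  rcases (add_nonneg ha hc).eq_or_lt with h | h
  · have h1 : a = 0 := by linarith
    have h2 : c = 0 := by linarith
    simp [h1, h2]
  · have hS : a + c ≤ b + d := by linarith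
    have h1 := aux_key ha hab h hS
    have h2 := aux_key hc hcd h hS
    have h3 : b * (a + c) / (b + d) + d * (a + c) / (b + d) = a + c := by
      have : b + d ≠ 0 := by linarith
      field_simp
    linarith

/-- Super-additivity of conditional entropy with respect to addition of
finite measures: for finite measurable partitions `𝒜 = (A_i)`, `ℬ = (B_j)` of `X` and finite
measures `μ₁, μ₂`, one has `H_{μ₁+μ₂}(𝒜 | ℬ) ≥ H_{μ₁}(𝒜 | ℬ) + H_{μ₂}(𝒜 | ℬ)`. -/
theorem stmt10 {X : Type*} [MeasurableSpace X]
    {p q : ℕ} (A : Fin p → Set X) (B : Fin q → Set X)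
    (hAmeas : ∀ i, MeasurableSet (A i)) (hBmeas : ∀ j, MeasurableSet (B j))
    (hAdis : Pairwise (Function.onFun Disjoint A))
    (hBdis : Pairwise (Function.onFun Disjoint B))
    (hAcov : ⋃ i, A i = Set.univ) (hBcov : ⋃ j, B j = Set.univ)
    (μ₁ μ₂ : Measure X) [IsFiniteMeasure μ₁] [IsFiniteMeasure μ₂] :
    condEntropyFin μ₁ A B + condEntropyFin μ₂ A B ≤ condEntropyFin (μ₁ + μ₂) A B := by
  unfold condEntropyFin
  simp only [← Finset.sum_add_distrib]
  refine Finset.sum_le_sum fun i _ => Finset.sum_le_sum fun j _ => ?_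
  simp only [Measure.add_apply]
  rw [ENNReal.toReal_add (measure_ne_top _ _) (measure_ne_top _ _),
    ENNReal.toReal_add (measure_ne_top _ _) (measure_ne_top _ _)]
  exact aux_super ENNReal.toReal_nonneg
    (ENNReal.toReal_mono (measure_ne_top _ _) (measure_mono Set.inter_subset_right))
    ENNReal.toReal_nonneg
    (ENNReal.toReal_mono (measure_ne_top _ _) (measure_mono Set.inter_subset_right))
end

section
/- Let X be a measurable space and let 𝒜 = (A_1, …, A_p) and ℬ = (B_1, …, B_q) be finite measurable partitions of X (finite families of pairwise disjoint measurable sets whose unions are X). For a finite measure μ on X define the conditional entropy H_μ(𝒜 | ℬ) := ∑_{i=1}^{p} ∑_{j=1}^{q} μ(A_i ∩ B_j) · (log μ(B_j) − log μ(A_i ∩ B_j)), with the convention that summands with μ(A_i ∩ B_j) = 0 are taken to be 0. Then for any two finite measures μ₁, μ₂ on X with μ₂ ≤ μ₁ (that is, μ₂(S) ≤ μ₁(S) for every measurable S), one has H_{μ₁}(𝒜 | ℬ) ≥ H_{μ₂}(𝒜 | ℬ). -/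
open MeasureTheory

lemma aux_term {x y S T : ℝ} (hx : 0 ≤ x) (hxy : x ≤ y) (hS : x ≤ S) (hT : y ≤ T) :
    x * (Real.log S - Real.log x) ≤ y * (Real.log T - Real.log y) + (S * y / T - x) := by
  rcases hx.eq_or_lt with rfl | hx
  · rcases hxy.eq_or_lt with rfl | hy
    · simp
    · have h1 : Real.log y ≤ Real.log T := Real.log_le_log hy hT
      have h2 : 0 ≤ S * y / T := by
        have : 0 < T := hy.trans_le hT
        positivity
      have h3 := mul_nonneg hy.le (sub_nonneg.2 h1)
      linarith
  · have hy : 0 < y := hx.trans_le hxy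
    have hS' : 0 < S := hx.trans_le hS
    have hT' : 0 < T := hy.trans_le hT
    have h1 : Real.log y ≤ Real.log T := Real.log_le_log hy hT
    have h3 := mul_le_mul_of_nonneg_right hxy (sub_nonneg.2 h1)
    have h4 := Real.log_le_sub_one_of_pos (show 0 < S * y / (x * T) by positivity)
    rw [Real.log_div (by positivity) (by positivity), Real.log_mul hS'.ne' hy.ne',
      Real.log_mul hx.ne' hT'.ne'] at h4
    have h5 := mul_le_mul_of_nonneg_left h4 hx.le
    have h6 : x * (S * y / (x * T) - 1) = S * y / T - x := by
      field_simp
    linarith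

lemma aux_sum {p : ℕ} (x y : Fin p → ℝ) (hx : ∀ i, 0 ≤ x i) (hxy : ∀ i, x i ≤ y i) :
    ∑ i, x i * (Real.log (∑ k, x k) - Real.log (x i)) ≤
      ∑ i, y i * (Real.log (∑ k, y k) - Real.log (y i)) := by
  have hy : ∀ i, 0 ≤ y i := fun i => (hx i).trans (hxy i)
  have h := Finset.sum_le_sum (s := Finset.univ) fun i _ =>
    aux_term (hx i) (hxy i)
      (Finset.single_le_sum (f := x) (fun k _ => hx k) (Finset.mem_univ i))
      (Finset.single_le_sum (f := y) (fun k _ => hy k) (Finset.mem_univ i))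
  rw [Finset.sum_add_distrib, Finset.sum_sub_distrib, ← Finset.sum_div, ← Finset.mul_sum] at h
  have h0 : 0 ≤ ∑ k, x k := Finset.sum_nonneg fun k _ => hx k
  have h2 : (∑ k, x k) * (∑ k, y k) / (∑ k, y k) ≤ ∑ k, x k := by
    by_cases hT : ∑ k, y k = 0
    · rw [hT]; simpa using h0
    · rw [mul_div_cancel_right₀ _ hT]
  linarith

lemma aux_meas {X : Type*} [MeasurableSpace X] {p : ℕ} (A : Fin p → Set X)
    (hAmeas : ∀ i, MeasurableSet (A i)) (hAdis : Pairwise (Function.onFun Disjoint A))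
    (hAcov : ⋃ i, A i = Set.univ) (μ : Measure X) [IsFiniteMeasure μ] (B : Set X)
    (hB : MeasurableSet B) : (μ B).toReal = ∑ i, (μ (A i ∩ B)).toReal := by
  have h : μ B = ∑ i, μ (A i ∩ B) := by
    rw [← tsum_fintype (L := .unconditional _), ← measure_iUnion, ← Set.iUnion_inter, hAcov, Set.univ_inter]
    · intro i j hij
      exact (hAdis hij).mono Set.inter_subset_left Set.inter_subset_left
    · exact fun i => (hAmeas i).inter hB
  rw [h, ENNReal.toReal_sum fun i _ => measure_ne_top _ _]

/-- Monotonicity of conditional entropy with respect to the pointwise order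
on finite measures: for finite measurable partitions `𝒜 = (A_i)`, `ℬ = (B_j)` of `X` and
finite measures `μ₂ ≤ μ₁`, one has `H_{μ₁}(𝒜 | ℬ) ≥ H_{μ₂}(𝒜 | ℬ)`. -/
theorem stmt11 {X : Type*} [MeasurableSpace X]
    {p q : ℕ} (A : Fin p → Set X) (B : Fin q → Set X)
    (hAmeas : ∀ i, MeasurableSet (A i)) (hBmeas : ∀ j, MeasurableSet (B j))
    (hAdis : Pairwise (Function.onFun Disjoint A))
    (hBdis : Pairwise (Function.onFun Disjoint B))
    (hAcov : ⋃ i, A i = Set.univ) (hBcov : ⋃ j, B j = Set.univ)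
    (μ₁ μ₂ : Measure X) [IsFiniteMeasure μ₁] [IsFiniteMeasure μ₂]
    (hle : μ₂ ≤ μ₁) :
    condEntropyFin μ₂ A B ≤ condEntropyFin μ₁ A B := by
  unfold condEntropyFin
  rw [Finset.sum_comm, Finset.sum_comm (γ := Fin p)]
  refine Finset.sum_le_sum fun j _ => ?_
  rw [aux_meas A hAmeas hAdis hAcov μ₁ (B j) (hBmeas j),
    aux_meas A hAmeas hAdis hAcov μ₂ (B j) (hBmeas j)]
  exact aux_sum _ _ (fun i => ENNReal.toReal_nonneg)
    (fun i => ENNReal.toReal_mono (measure_ne_top _ _) (hle _))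
end
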